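/- arXiv:0804.2911 — 2 statements merged into one kernel-verified Lean document; each statement's English description precedes it below -/
import Mathlib

section
/- Let U ⊆ ℝⁿ be open and connected, let Γ be smooth Christoffel symbols on U, and let h be a smooth metric on U (a smooth field of symmetric invertible matrices). Suppose the connection determined by Γ is locally metric compatible with h up to conformal factor, i.e. for every point x ∈ U there is an open neighbourhood V ⊆ U of x and a smooth positive function μ : V → ℝ such that the field μ⁻¹h is parallel on V: ∂ₖ(μ⁻¹h)ᵢⱼ − Σₗ Γˡₖᵢ (μ⁻¹h)ₗⱼ − Σₗ Γˡₖⱼ (μ⁻¹h)ᵢₗ = 0 on V for all i,j,k. Then there exists a smooth closed 1-form Ψ on U (i.e. smooth Ψ : U → ℝⁿ with ∂ᵢΨⱼ = ∂ⱼΨᵢ) such that ∇h = h ⊗ Ψ on U, i.e. ∂ₖhᵢⱼ − Σₗ Γˡₖᵢ hₗⱼ − Σₗ Γˡₖⱼ hᵢₗ = hᵢⱼ Ψₖ for all i,j,k. -/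
/-- The `k`-th partial derivative of a scalar function on `ℝⁿ`. -/
noncomputable def pd {n : ℕ} (f : (Fin n → ℝ) → ℝ) (k : Fin n) (x : Fin n → ℝ) : ℝ :=
  fderiv ℝ f x (Pi.single k 1)

/-- The covariant derivative `(∇ₖ g)ᵢⱼ = ∂ₖ gᵢⱼ − Σₗ Γˡₖᵢ gₗⱼ − Σₗ Γˡₖⱼ gᵢₗ` of a
matrix-valued field `g` with respect to the Christoffel symbols `Γ` (written `Γ x l k i`). -/
noncomputable def covDeriv {n : ℕ} (Γ : (Fin n → ℝ) → Fin n → Fin n → Fin n → ℝ)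
    (g : (Fin n → ℝ) → Matrix (Fin n) (Fin n) ℝ) (k i j : Fin n) (x : Fin n → ℝ) : ℝ :=
  pd (fun y => g y i j) k x - (∑ l, Γ x l k i * g x l j) - ∑ l, Γ x l k j * g x i l

/-- A smooth metric on `U`: a smooth field of symmetric invertible matrices. -/
def SmoothMetricOn {n : ℕ} (h : (Fin n → ℝ) → Matrix (Fin n) (Fin n) ℝ)
    (U : Set (Fin n → ℝ)) : Prop :=
  (∀ i j, ContDiffOn ℝ (⊤ : ℕ∞) (fun x => h x i j) U) ∧
  ∀ x ∈ U, (h x).IsSymm ∧ IsUnit (h x)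

/-- Smooth Christoffel symbols on `U`. -/
def SmoothChristoffelOn {n : ℕ} (Γ : (Fin n → ℝ) → Fin n → Fin n → Fin n → ℝ)
    (U : Set (Fin n → ℝ)) : Prop :=
  ∀ l k i, ContDiffOn ℝ (⊤ : ℕ∞) (fun x => Γ x l k i) U

/-!
If `μ⁻¹ h` is parallel near a point, the Leibniz rule gives `∇h = h ⊗ d(log μ)` there. Since `h`
vanishes nowhere, the 1-form in this equation is unique, so the local forms `d(log μ)` agree on
overlaps and glue to a 1-form that is locally exact, hence closed.
-/

open Filter Topology

open scoped ContDiff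

section PartialDerivatives

variable {n : ℕ} {f g : (Fin n → ℝ) → ℝ} {x : Fin n → ℝ}

theorem pd_mul (hf : DifferentiableAt ℝ f x) (hg : DifferentiableAt ℝ g x) (k : Fin n) :
    pd (fun y => f y * g y) k x = f x * pd g k x + g x * pd f k x := by
  simp [pd, fderiv_fun_mul hf hg]

theorem pd_inv (hf : DifferentiableAt ℝ f x) (hx : f x ≠ 0) (k : Fin n) :
    pd (fun y => (f y)⁻¹) k x = -(f x ^ 2)⁻¹ * pd f k x := by
  have hinv : HasFDerivAt (fun y => (f y)⁻¹) (-(f x ^ 2)⁻¹ • fderiv ℝ f x) x :=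
    (hasDerivAt_inv hx).comp_hasFDerivAt x hf.hasFDerivAt
  simp [pd, hinv.fderiv]

theorem pd_log (hf : DifferentiableAt ℝ f x) (hx : f x ≠ 0) (k : Fin n) :
    pd (fun y => Real.log (f y)) k x = (f x)⁻¹ * pd f k x := by
  simp [pd, fderiv.log hf hx]

theorem contDiffAt_pd {r s : ℕ∞ω} (hf : ContDiffAt ℝ s f x) (hrs : r + 1 ≤ s) (k : Fin n) :
    ContDiffAt ℝ r (pd f k) x :=
  (hf.fderiv_right hrs).clm_apply contDiffAt_const

theorem pd_pd_eq_fderiv_fderiv (hf : ContDiffAt ℝ 2 f x) (i j : Fin n) :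
    pd (pd f j) i x = fderiv ℝ (fderiv ℝ f) x (Pi.single i 1) (Pi.single j 1) := by
  have hdf : DifferentiableAt ℝ (fderiv ℝ f) x :=
    (hf.fderiv_right (m := 1) one_add_one_eq_two.le).differentiableAt one_ne_zero
  change fderiv ℝ (fun y => fderiv ℝ f y (Pi.single j 1)) x (Pi.single i 1) = _
  simp [fderiv_clm_apply hdf (differentiableAt_const _)]

theorem pd_pd_comm (hf : ContDiffAt ℝ 2 f x) (i j : Fin n) :
    pd (pd f j) i x = pd (pd f i) j x := by
  rw [pd_pd_eq_fderiv_fderiv hf, pd_pd_eq_fderiv_fderiv hf]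
  exact hf.isSymmSndFDerivAt (by simp) _ _

end PartialDerivatives

section LocalPotential

variable {n : ℕ} {r s : ℕ∞ω} {Ψ : (Fin n → ℝ) → Fin n → ℝ} {x : Fin n → ℝ}

/-- The 1-form `Ψ` is exact near `x`, with a potential of class `C^s`: local exactness, from which
the regularity and the closedness of `Ψ` are read off pointwise. -/
def HasLocalPotentialAt (s : ℕ∞ω) (Ψ : (Fin n → ℝ) → Fin n → ℝ) (x : Fin n → ℝ) : Prop :=
  ∃ f : (Fin n → ℝ) → ℝ, ContDiffAt ℝ s f x ∧ ∀ k, (fun y => Ψ y k) =ᶠ[𝓝 x] pd f k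

theorem HasLocalPotentialAt.contDiffAt (hΨ : HasLocalPotentialAt s Ψ x) (hrs : r + 1 ≤ s)
    (k : Fin n) : ContDiffAt ℝ r (fun y => Ψ y k) x := by
  obtain ⟨f, hf, hΨf⟩ := hΨ
  exact (contDiffAt_pd hf hrs k).congr_of_eventuallyEq (hΨf k)

theorem HasLocalPotentialAt.pd_comm (hΨ : HasLocalPotentialAt s Ψ x) (hs : 2 ≤ s)
    (i j : Fin n) : pd (fun y => Ψ y j) i x = pd (fun y => Ψ y i) j x := by
  obtain ⟨f, hf, hΨf⟩ := hΨ
  calc pd (fun y => Ψ y j) i x = pd (pd f j) i x := by simp only [pd, (hΨf j).fderiv_eq]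
    _ = pd (pd f i) j x := pd_pd_comm (hf.of_le hs) i j
    _ = pd (fun y => Ψ y i) j x := by simp only [pd, (hΨf i).fderiv_eq]

end LocalPotential

section CovariantDerivative

variable {n : ℕ} {Γ : (Fin n → ℝ) → Fin n → Fin n → Fin n → ℝ}
  {h : (Fin n → ℝ) → Matrix (Fin n) (Fin n) ℝ} {μ : (Fin n → ℝ) → ℝ} {x : Fin n → ℝ}
  {k i j : Fin n}

theorem covDeriv_smul (hμ : DifferentiableAt ℝ μ x)
    (hij : DifferentiableAt ℝ (fun y => h y i j) x) :
    covDeriv Γ (fun y => μ y • h y) k i j x = μ x * covDeriv Γ h k i j x + h x i j * pd μ k x := by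
  simp only [covDeriv, Matrix.smul_apply, smul_eq_mul, pd_mul hμ hij, mul_left_comm _ (μ x),
    ← Finset.mul_sum]
  ring

theorem covDeriv_inv_smul (hμ : DifferentiableAt ℝ μ x) (hx : μ x ≠ 0)
    (hij : DifferentiableAt ℝ (fun y => h y i j) x) :
    covDeriv Γ (fun y => (μ y)⁻¹ • h y) k i j x =
      (μ x)⁻¹ * (covDeriv Γ h k i j x - h x i j * pd (fun y => Real.log (μ y)) k x) := by
  rw [covDeriv_smul (hμ.fun_inv hx) hij, pd_inv hμ hx, pd_log hμ hx]
  ring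

theorem covDeriv_inv_smul_eq_zero_iff (hμ : DifferentiableAt ℝ μ x) (hx : μ x ≠ 0)
    (hij : DifferentiableAt ℝ (fun y => h y i j) x) :
    covDeriv Γ (fun y => (μ y)⁻¹ • h y) k i j x = 0 ↔
      covDeriv Γ h k i j x = h x i j * pd (fun y => Real.log (μ y)) k x := by
  simp [covDeriv_inv_smul hμ hx hij, hx, sub_eq_zero]

theorem covDeriv_eq_mul_pd_log_of_parallel {V : Set (Fin n → ℝ)} (hV : IsOpen V)
    (hμ : DifferentiableOn ℝ μ V) (hμne : ∀ y ∈ V, μ y ≠ 0)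
    (hdiff : ∀ i j, DifferentiableOn ℝ (fun y => h y i j) V)
    (hpar : ∀ y ∈ V, ∀ i j k, covDeriv Γ (fun z => (μ z)⁻¹ • h z) k i j y = 0) :
    ∀ y ∈ V, ∀ i j k, covDeriv Γ h k i j y = h y i j * pd (fun z => Real.log (μ z)) k y :=
  fun y hy i j k => (covDeriv_inv_smul_eq_zero_iff (hμ.differentiableAt (hV.mem_nhds hy))
    (hμne y hy) ((hdiff i j).differentiableAt (hV.mem_nhds hy))).1 (hpar y hy i j k)

end CovariantDerivative

section RecurrenceForm

variable {n : ℕ} {Γ : (Fin n → ℝ) → Fin n → Fin n → Fin n → ℝ}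
  {h : (Fin n → ℝ) → Matrix (Fin n) (Fin n) ℝ} {x : Fin n → ℝ} {k : Fin n}

/-- The recurrence 1-form of `h`: the only candidate for a `Ψ` with `∇h = h ⊗ Ψ`, obtained by
contracting this equation with `h` entrywise. Where `h` vanishes it has the junk value `0`. -/
noncomputable def recurrenceForm (Γ : (Fin n → ℝ) → Fin n → Fin n → Fin n → ℝ)
    (h : (Fin n → ℝ) → Matrix (Fin n) (Fin n) ℝ) (x : Fin n → ℝ) (k : Fin n) : ℝ :=
  (∑ i, ∑ j, h x i j * covDeriv Γ h k i j x) / ∑ i, ∑ j, h x i j ^ 2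

theorem sum_sum_sq_ne_zero {ι κ : Type*} [Fintype ι] [Fintype κ] {A : Matrix ι κ ℝ}
    (hA : A ≠ 0) : ∑ i, ∑ j, A i j ^ 2 ≠ 0 := by
  contrapose! hA
  ext i j
  have hrows := Fintype.sum_eq_zero_iff_of_nonneg (f := fun i => ∑ j, A i j ^ 2)
    fun i => Finset.sum_nonneg fun j _ => sq_nonneg (A i j)
  have hrow := Fintype.sum_eq_zero_iff_of_nonneg (f := fun j => A i j ^ 2)
    fun j => sq_nonneg (A i j)
  exact pow_eq_zero_iff two_ne_zero |>.1 (congrFun (hrow.1 (congrFun (hrows.1 hA) i)) j)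

theorem recurrenceForm_eq_of_covDeriv_eq_mul {c : ℝ} (hx : h x ≠ 0)
    (hc : ∀ i j, covDeriv Γ h k i j x = h x i j * c) : recurrenceForm Γ h x k = c := by
  rw [recurrenceForm, div_eq_iff (sum_sum_sq_ne_zero hx), Finset.mul_sum]
  simp only [hc, Finset.mul_sum]
  exact Finset.sum_congr rfl fun i _ => Finset.sum_congr rfl fun j _ => by ring

theorem hasLocalPotentialAt_recurrenceForm {s : ℕ∞ω} {f : (Fin n → ℝ) → ℝ}
    (hf : ContDiffAt ℝ s f x) (hne : ∀ᶠ y in 𝓝 x, h y ≠ 0)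
    (hfh : ∀ᶠ y in 𝓝 x, ∀ i j k, covDeriv Γ h k i j y = h y i j * pd f k y) :
    HasLocalPotentialAt s (recurrenceForm Γ h) x := by
  refine ⟨f, hf, fun k => ?_⟩
  filter_upwards [hne, hfh] with y hy hfy
  exact recurrenceForm_eq_of_covDeriv_eq_mul hy fun i j => hfy i j k

theorem covDeriv_eq_mul_recurrenceForm {ψ : Fin n → ℝ} (hx : h x ≠ 0)
    (hψ : ∀ i j k, covDeriv Γ h k i j x = h x i j * ψ k) (i j k : Fin n) :
    covDeriv Γ h k i j x = h x i j * recurrenceForm Γ h x k := by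
  rw [recurrenceForm_eq_of_covDeriv_eq_mul hx fun i j => hψ i j k, hψ]

end RecurrenceForm

section SmoothMetric

variable {n : ℕ} {h : (Fin n → ℝ) → Matrix (Fin n) (Fin n) ℝ} {U : Set (Fin n → ℝ)}

theorem SmoothMetricOn.differentiableOn (hh : SmoothMetricOn h U) (i j : Fin n) :
    DifferentiableOn ℝ (fun x => h x i j) U :=
  (hh.1 i j).differentiableOn (by simp)

theorem SmoothMetricOn.ne_zero [Nonempty (Fin n)] (hh : SmoothMetricOn h U) {x : Fin n → ℝ}
    (hx : x ∈ U) : h x ≠ 0 :=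
  (hh.2 x hx).2.ne_zero

end SmoothMetric

theorem exists_closed_oneForm_of_locallyMetric_general {n : ℕ} {U : Set (Fin n → ℝ)}
    (hU : IsOpen U) {Γ : (Fin n → ℝ) → Fin n → Fin n → Fin n → ℝ}
    {h : (Fin n → ℝ) → Matrix (Fin n) (Fin n) ℝ}
    (hdiff : ∀ i j, DifferentiableOn ℝ (fun x => h x i j) U) (hne : ∀ x ∈ U, h x ≠ 0)
    {r s : ℕ∞ω} (hr : 1 ≤ r) (hrs : r + 1 ≤ s)
    (hloc : ∀ x ∈ U, ∃ V : Set (Fin n → ℝ), IsOpen V ∧ x ∈ V ∧ V ⊆ U ∧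
      ∃ μ : (Fin n → ℝ) → ℝ, ContDiffOn ℝ s μ V ∧ (∀ y ∈ V, 0 < μ y) ∧
        ∀ y ∈ V, ∀ i j k, covDeriv Γ (fun z => (μ z)⁻¹ • h z) k i j y = 0) :
    ∃ Ψ : (Fin n → ℝ) → Fin n → ℝ,
      (∀ k, ContDiffOn ℝ r (fun x => Ψ x k) U) ∧
      (∀ x ∈ U, ∀ i j, pd (fun y => Ψ y j) i x = pd (fun y => Ψ y i) j x) ∧
      (∀ x ∈ U, ∀ i j k, covDeriv Γ h k i j x = h x i j * Ψ x k) := by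
  have hs : 2 ≤ s := one_add_one_eq_two.symm.le.trans ((add_le_add_left hr 1).trans hrs)
  have hlog (x) (hx : x ∈ U) : ∃ f : (Fin n → ℝ) → ℝ, ContDiffAt ℝ s f x ∧
      ∀ᶠ y in 𝓝 x, ∀ i j k, covDeriv Γ h k i j y = h y i j * pd f k y := by
    obtain ⟨V, hV, hxV, hVU, μ, hμ, hpos, hpar⟩ := hloc x hx
    have hVx := hV.mem_nhds hxV
    exact ⟨fun y => Real.log (μ y), (hμ.contDiffAt hVx).log (hpos x hxV).ne',
      eventually_of_mem hVx <| covDeriv_eq_mul_pd_log_of_parallel hV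
        (hμ.differentiableOn (two_pos.trans_le hs).ne') (fun y hy => (hpos y hy).ne')
        (fun i j => (hdiff i j).mono hVU) hpar⟩
  have hpot (x) (hx : x ∈ U) : HasLocalPotentialAt s (recurrenceForm Γ h) x := by
    obtain ⟨f, hf, hfh⟩ := hlog x hx
    exact hasLocalPotentialAt_recurrenceForm hf (eventually_of_mem (hU.mem_nhds hx) hne) hfh
  refine ⟨recurrenceForm Γ h, fun k x hx => ((hpot x hx).contDiffAt hrs k).contDiffWithinAt,
    fun x hx => (hpot x hx).pd_comm hs, fun x hx => ?_⟩
  obtain ⟨f, -, hfh⟩ := hlog x hx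
  exact covDeriv_eq_mul_recurrenceForm (hne x hx) hfh.self_of_nhds

/-- **Theorem 1**: if the connection given by `Γ` is locally metric compatible with the
metric `h` up to conformal factor on the open connected set `U`, then there is a smooth
closed 1-form `Ψ` on `U` with `∇h = h ⊗ Ψ`. -/
theorem exists_closed_oneForm_of_locallyMetric {n : ℕ} (U : Set (Fin n → ℝ))
    (hU : IsOpen U) (hUconn : IsConnected U)
    (Γ : (Fin n → ℝ) → Fin n → Fin n → Fin n → ℝ) (hΓ : SmoothChristoffelOn Γ U)
    (h : (Fin n → ℝ) → Matrix (Fin n) (Fin n) ℝ) (hh : SmoothMetricOn h U)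
    (hloc : ∀ x ∈ U, ∃ V : Set (Fin n → ℝ), IsOpen V ∧ x ∈ V ∧ V ⊆ U ∧
      ∃ μ : (Fin n → ℝ) → ℝ, ContDiffOn ℝ (⊤ : ℕ∞) μ V ∧ (∀ y ∈ V, 0 < μ y) ∧
        ∀ y ∈ V, ∀ i j k, covDeriv Γ (fun z => (μ z)⁻¹ • h z) k i j y = 0) :
    ∃ Ψ : (Fin n → ℝ) → Fin n → ℝ,
      (∀ k, ContDiffOn ℝ (⊤ : ℕ∞) (fun x => Ψ x k) U) ∧
      (∀ x ∈ U, ∀ i j, pd (fun y => Ψ y j) i x = pd (fun y => Ψ y i) j x) ∧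
      (∀ x ∈ U, ∀ i j k, covDeriv Γ h k i j x = h x i j * Ψ x k) := by
  rcases isEmpty_or_nonempty (Fin n) with hn | hn
  · exact ⟨0, hn.elim, fun _ _ => hn.elim, fun _ _ => hn.elim⟩
  · exact exists_closed_oneForm_of_locallyMetric_general hU hh.differentiableOn
      (fun _ => hh.ne_zero) (by simp) (by simp) hloc
end

section
/- Let U ⊆ ℝⁿ be open, let h be a smooth metric on U, and let Ψ be a smooth 1-form on U. Then there exists a unique family of smooth Christoffel symbols Γ on U that is symmetric in its lower indices (Γˡᵢⱼ = Γˡⱼᵢ for all i,j,l) and satisfies ∇h = h ⊗ Ψ on U, i.e. ∂ₖhᵢⱼ − Σₗ Γˡₖᵢ hₗⱼ − Σₗ Γˡₖⱼ hᵢₗ = hᵢⱼ Ψₖ for all i,j,k. -/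
/-!
Lower the upper index of the Christoffel symbols with `h`: write `G k i j = ∑ l, Γ l k i * h l j`.
Symmetry of `Γ` becomes symmetry of `G` in its first two indices, and `∇h = Q` becomes
`G k i j + G k j i = S k i j` with `S k i j = ∂ₖ hᵢⱼ - Q k i j`, which is symmetric in its last two
indices. The Koszul trick solves this: `S k i j + S i k j - S j k i = 2 G k i j`. The theorem is
the case `Q = h ⊗ Ψ`.
-/

open scoped Matrix

section Koszul

variable {ι R : Type*} [CommRing R] [Invertible (2 : R)]

/-- The Koszul combination: when every `S k` is symmetric, this is the array `G`, symmetric in its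
first two indices, whose symmetrization `G k i j + G k j i` over the last two is `S k i j`. -/
def koszul (S : ι → Matrix ι ι R) (k i : ι) : ι → R :=
  fun j => ⅟2 * (S k i j + S i k j - S j k i)

variable {S : ι → Matrix ι ι R}

theorem koszul_comm (hS : ∀ k, (S k).IsSymm) (k i : ι) : koszul S k i = koszul S i k := by
  funext j
  simp only [koszul, (hS j).apply i k]
  ring

theorem koszul_add_koszul_swap {k : ι} (hS : (S k).IsSymm) (i j : ι) :
    koszul S k i j + koszul S k j i = S k i j := by
  simp only [koszul, hS.apply i j]
  rw [← mul_add, invOf_mul_eq_iff_eq_mul_left]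
  ring

theorem eq_koszul_of_add_swap {G : ι → ι → ι → R} (hG : ∀ k i, G k i = G i k)
    (hGS : ∀ k i j, G k i j + G k j i = S k i j) : G = koszul S := by
  funext k i j
  rw [koszul, eq_comm, invOf_mul_eq_iff_eq_mul_left, ← hGS k i j, ← hGS i k j, ← hGS j k i,
    hG i k, hG j k, hG j i]
  ring

theorem eq_koszul_iff (hS : ∀ k, (S k).IsSymm) {G : ι → ι → ι → R} :
    G = koszul S ↔ (∀ k i, G k i = G i k) ∧ ∀ k i j, G k i j + G k j i = S k i j := by
  refine ⟨?_, fun ⟨hG, hGS⟩ => eq_koszul_of_add_swap hG hGS⟩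
  rintro rfl
  exact ⟨koszul_comm hS, fun k => koszul_add_koszul_swap (hS k)⟩

end Koszul

section IndexGymnastics

variable {ι R : Type*} [Fintype ι] [CommRing R]

/-- Christoffel symbols of the first kind: the upper index, which comes first in `Γ`, is lowered
with `g` and put last. -/
def lowerIndex (g : Matrix ι ι R) (Γ : ι → ι → ι → R) (k i : ι) : ι → R :=
  (fun l => Γ l k i) ᵥ* g

variable [DecidableEq ι]

/-- Christoffel symbols of the second kind: the last index of `G` is raised with `g⁻¹` and put
first. -/
noncomputable def raiseIndex (g : Matrix ι ι R) (G : ι → ι → ι → R) (l k i : ι) : R :=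
  (G k i ᵥ* g⁻¹) l

variable {g : Matrix ι ι R} {Γ : ι → ι → ι → R}

theorem lowerIndex_raiseIndex (hg : IsUnit g) (G : ι → ι → ι → R) :
    lowerIndex g (raiseIndex g G) = G := by
  funext k i
  change (G k i ᵥ* g⁻¹) ᵥ* g = G k i
  rw [Matrix.vecMul_vecMul, Matrix.nonsing_inv_mul _ ((Matrix.isUnit_iff_isUnit_det g).1 hg),
    Matrix.vecMul_one]

theorem lowerIndex_apply_eq_iff (hg : IsUnit g) {Γ' : ι → ι → ι → R} {k i k' i' : ι} :
    lowerIndex g Γ k i = lowerIndex g Γ' k' i' ↔ ∀ l, Γ l k i = Γ' l k' i' :=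
  (Matrix.vecMul_injective_of_isUnit hg).eq_iff.trans funext_iff

theorem lowerIndex_eq_iff (hg : IsUnit g) {G : ι → ι → ι → R} :
    lowerIndex g Γ = G ↔ Γ = raiseIndex g G := by
  refine ⟨fun hG => ?_, fun hΓ => hΓ ▸ lowerIndex_raiseIndex hg G⟩
  funext l k i
  refine (lowerIndex_apply_eq_iff hg).1 ?_ l
  rw [hG, lowerIndex_raiseIndex hg]

theorem symmetric_and_lowerIndex_add_swap_iff [Invertible (2 : R)] (hg : IsUnit g)
    {S : ι → Matrix ι ι R} (hS : ∀ k, (S k).IsSymm) :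
    ((∀ i j l, Γ l i j = Γ l j i) ∧
        ∀ k i j, lowerIndex g Γ k i j + lowerIndex g Γ k j i = S k i j) ↔
      Γ = raiseIndex g (koszul S) := by
  rw [← lowerIndex_eq_iff hg, eq_koszul_iff hS]
  simp only [lowerIndex_apply_eq_iff hg]

end IndexGymnastics

section ContDiffOn

variable {𝕜 E ι : Type*} [NontriviallyNormedField 𝕜] [NormedAddCommGroup E] [NormedSpace 𝕜 E]
  [Fintype ι] [DecidableEq ι] {m : WithTop ℕ∞} {M : E → Matrix ι ι 𝕜} {U : Set E}

theorem contDiffOn_matrix_det (hM : ∀ i j, ContDiffOn 𝕜 m (fun x => M x i j) U) :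
    ContDiffOn 𝕜 m (fun x => (M x).det) U := by
  simp only [Matrix.det_apply']
  exact ContDiffOn.sum fun σ _ => contDiffOn_const.mul (contDiffOn_prod fun i _ => hM (σ i) i)

theorem contDiffOn_matrix_adjugate_apply (hM : ∀ i j, ContDiffOn 𝕜 m (fun x => M x i j) U)
    (i j : ι) : ContDiffOn 𝕜 m (fun x => (M x).adjugate i j) U := by
  simp only [Matrix.adjugate_apply]
  refine contDiffOn_matrix_det fun a b => ?_
  obtain rfl | haj := eq_or_ne a j
  · simpa only [Matrix.updateRow_self] using contDiffOn_const
  · simpa only [Matrix.updateRow_ne haj] using hM a b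

theorem contDiffOn_matrix_inv_apply (hM : ∀ i j, ContDiffOn 𝕜 m (fun x => M x i j) U)
    (hunit : ∀ x ∈ U, IsUnit (M x)) (i j : ι) : ContDiffOn 𝕜 m (fun x => (M x)⁻¹ i j) U := by
  have hdet : ∀ x ∈ U, (M x).det ≠ 0 := fun x hx =>
    ((Matrix.isUnit_iff_isUnit_det _).1 (hunit x hx)).ne_zero
  simp only [Matrix.inv_def, Matrix.smul_apply, smul_eq_mul, Ring.inverse_eq_inv']
  exact ((contDiffOn_matrix_det hM).inv hdet).mul (contDiffOn_matrix_adjugate_apply hM i j)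

theorem contDiffOn_raiseIndex {G : E → ι → ι → ι → 𝕜}
    (hM : ∀ i j, ContDiffOn 𝕜 m (fun x => M x i j) U) (hunit : ∀ x ∈ U, IsUnit (M x))
    (hG : ∀ k i j, ContDiffOn 𝕜 m (fun x => G x k i j) U) (l k i : ι) :
    ContDiffOn 𝕜 m (fun x => raiseIndex (M x) (G x) l k i) U :=
  ContDiffOn.sum fun j _ => (hG k i j).mul (contDiffOn_matrix_inv_apply hM hunit j l)

end ContDiffOn

section Connection

variable {n : ℕ} {m : WithTop ℕ∞} {U : Set (Fin n → ℝ)}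
  {h : (Fin n → ℝ) → Matrix (Fin n) (Fin n) ℝ}
  {Q : (Fin n → ℝ) → Fin n → Matrix (Fin n) (Fin n) ℝ}

theorem contDiffOn_pd (hU : IsOpen U) {f : (Fin n → ℝ) → ℝ} (hf : ContDiffOn ℝ (m + 1) f U)
    (k : Fin n) : ContDiffOn ℝ m (pd f k) U :=
  (hf.fderiv_of_isOpen hU le_rfl).clm_apply contDiffOn_const

/-- The entrywise partial derivative `∂ₖ h` of a matrix field. -/
noncomputable def pdMatrix (h : (Fin n → ℝ) → Matrix (Fin n) (Fin n) ℝ) (x : Fin n → ℝ)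
    (k : Fin n) : Matrix (Fin n) (Fin n) ℝ :=
  Matrix.of fun i j => pd (fun y => h y i j) k x

theorem isSymm_pdMatrix {x : Fin n → ℝ} (hsymm : ∀ᶠ y in nhds x, (h y).IsSymm) (k : Fin n) :
    (pdMatrix h x k).IsSymm := by
  refine Matrix.IsSymm.ext fun i j => ?_
  have hij : (fun y => h y j i) =ᶠ[nhds x] fun y => h y i j :=
    hsymm.mono fun y hy => hy.apply i j
  exact DFunLike.congr_fun hij.fderiv_eq (Pi.single k 1)

theorem covDeriv_eq_pdMatrix_sub_lowerIndex {x : Fin n → ℝ} (hsymm : (h x).IsSymm)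
    (Γ : (Fin n → ℝ) → Fin n → Fin n → Fin n → ℝ) (k i j : Fin n) :
    covDeriv Γ h k i j x =
      pdMatrix h x k i j - lowerIndex (h x) (Γ x) k i j - lowerIndex (h x) (Γ x) k j i := by
  simp only [covDeriv, hsymm.apply _ i]
  rfl

/-- The Christoffel symbols of the symmetric connection with `∇h = Q`, where `Q x k i j` stands for
`(∇ₖ h)ᵢⱼ`. For `Q = 0` this is the Levi-Civita connection of `h`. -/
noncomputable def connectionOfCovDeriv (h : (Fin n → ℝ) → Matrix (Fin n) (Fin n) ℝ)
    (Q : (Fin n → ℝ) → Fin n → Matrix (Fin n) (Fin n) ℝ) (x : Fin n → ℝ) :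
    Fin n → Fin n → Fin n → ℝ :=
  raiseIndex (h x) (koszul fun k => pdMatrix h x k - Q x k)

theorem symmetric_and_covDeriv_eq_iff {x : Fin n → ℝ} (hsymm : ∀ᶠ y in nhds x, (h y).IsSymm)
    (hunit : IsUnit (h x)) (hQ : ∀ k, (Q x k).IsSymm)
    (Γ : (Fin n → ℝ) → Fin n → Fin n → Fin n → ℝ) :
    ((∀ i j l, Γ x l i j = Γ x l j i) ∧ ∀ i j k, covDeriv Γ h k i j x = Q x k i j) ↔
      Γ x = connectionOfCovDeriv h Q x := by
  rw [connectionOfCovDeriv, ← symmetric_and_lowerIndex_add_swap_iff hunit fun k =>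
    (isSymm_pdMatrix hsymm k).sub (hQ k)]
  have covDeriv_eq_iff (i j k : Fin n) : covDeriv Γ h k i j x = Q x k i j ↔
      lowerIndex (h x) (Γ x) k i j + lowerIndex (h x) (Γ x) k j i =
        (pdMatrix h x k - Q x k) i j := by
    rw [covDeriv_eq_pdMatrix_sub_lowerIndex hsymm.self_of_nhds, Matrix.sub_apply]
    constructor <;> intro heq <;> linarith
  simp only [covDeriv_eq_iff]
  exact and_congr_right fun _ => ⟨fun H k i j => H i j k, fun H i j k => H k i j⟩

theorem contDiffOn_connectionOfCovDeriv (hU : IsOpen U)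
    (hh : ∀ i j, ContDiffOn ℝ (m + 1) (fun x => h x i j) U) (hunit : ∀ x ∈ U, IsUnit (h x))
    (hQ : ∀ k i j, ContDiffOn ℝ m (fun x => Q x k i j) U) (l k i : Fin n) :
    ContDiffOn ℝ m (fun x => connectionOfCovDeriv h Q x l k i) U := by
  have hS (k i j : Fin n) : ContDiffOn ℝ m (fun x => (pdMatrix h x k - Q x k) i j) U :=
    (contDiffOn_pd hU (hh i j) k).sub (hQ k i j)
  exact contDiffOn_raiseIndex (fun i j => (hh i j).of_le le_self_add) hunit
    (fun k i j => contDiffOn_const.mul (((hS k i j).add (hS i k j)).sub (hS j k i))) l k i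

theorem existsUnique_symmetric_connection_general (hU : IsOpen U)
    (hh : ∀ i j, ContDiffOn ℝ (m + 1) (fun x => h x i j) U)
    (hmetric : ∀ x ∈ U, (h x).IsSymm ∧ IsUnit (h x))
    (hQ : ∀ k i j, ContDiffOn ℝ m (fun x => Q x k i j) U)
    (hQsymm : ∀ x ∈ U, ∀ k, (Q x k).IsSymm) :
    ∃ Γ : (Fin n → ℝ) → Fin n → Fin n → Fin n → ℝ,
      ((∀ l k i, ContDiffOn ℝ m (fun x => Γ x l k i) U) ∧
        (∀ x ∈ U, ∀ i j l, Γ x l i j = Γ x l j i) ∧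
        (∀ x ∈ U, ∀ i j k, covDeriv Γ h k i j x = Q x k i j)) ∧
      ∀ Γ' : (Fin n → ℝ) → Fin n → Fin n → Fin n → ℝ,
        (∀ x ∈ U, ∀ i j l, Γ' x l i j = Γ' x l j i) →
        (∀ x ∈ U, ∀ i j k, covDeriv Γ' h k i j x = Q x k i j) →
        ∀ x ∈ U, ∀ l i j, Γ' x l i j = Γ x l i j := by
  have characterization (Γ : (Fin n → ℝ) → Fin n → Fin n → Fin n → ℝ) {x} (hx : x ∈ U) :
      ((∀ i j l, Γ x l i j = Γ x l j i) ∧ ∀ i j k, covDeriv Γ h k i j x = Q x k i j) ↔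
        Γ x = connectionOfCovDeriv h Q x :=
    symmetric_and_covDeriv_eq_iff
      (Filter.eventually_of_mem (hU.mem_nhds hx) fun y hy => (hmetric y hy).1)
      (hmetric x hx).2 (hQsymm x hx) Γ
  refine ⟨connectionOfCovDeriv h Q,
    ⟨contDiffOn_connectionOfCovDeriv hU hh (fun x hx => (hmetric x hx).2) hQ,
      fun x hx => ((characterization _ hx).2 rfl).1,
      fun x hx => ((characterization _ hx).2 rfl).2⟩,
    fun Γ' hsymm hcov x hx l i j => ?_⟩
  rw [(characterization Γ' hx).1 ⟨hsymm x hx, hcov x hx⟩]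

end Connection

/-- **Proposition 4**: a pair `(h, Ψ)` of a smooth metric and a smooth 1-form on an open
set `U` determines a unique symmetric connection `Γ` by the equation `∇h = h ⊗ Ψ`. -/
theorem existsUnique_symmetric_connection {n : ℕ} (U : Set (Fin n → ℝ)) (hU : IsOpen U)
    (h : (Fin n → ℝ) → Matrix (Fin n) (Fin n) ℝ) (hh : SmoothMetricOn h U)
    (Ψ : (Fin n → ℝ) → Fin n → ℝ)
    (hΨsmooth : ∀ k, ContDiffOn ℝ (⊤ : ℕ∞) (fun x => Ψ x k) U) :
    ∃ Γ : (Fin n → ℝ) → Fin n → Fin n → Fin n → ℝ,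
      (SmoothChristoffelOn Γ U ∧
        (∀ x ∈ U, ∀ i j l, Γ x l i j = Γ x l j i) ∧
        (∀ x ∈ U, ∀ i j k, covDeriv Γ h k i j x = h x i j * Ψ x k)) ∧
      ∀ Γ' : (Fin n → ℝ) → Fin n → Fin n → Fin n → ℝ,
        (SmoothChristoffelOn Γ' U ∧
          (∀ x ∈ U, ∀ i j l, Γ' x l i j = Γ' x l j i) ∧
          (∀ x ∈ U, ∀ i j k, covDeriv Γ' h k i j x = h x i j * Ψ x k)) →
        ∀ x ∈ U, ∀ l i j, Γ' x l i j = Γ x l i j := by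
  obtain ⟨Γ, hΓ, hunique⟩ := existsUnique_symmetric_connection_general (m := (⊤ : ℕ∞)) hU hh.1 hh.2
    (Q := fun x k => Matrix.of fun i j => h x i j * Ψ x k)
    (fun k i j => (hh.1 i j).mul (hΨsmooth k))
    fun x hx k => Matrix.IsSymm.ext fun i j => congrArg (· * Ψ x k) ((hh.2 x hx).1.apply i j)
  exact ⟨Γ, hΓ, fun Γ' ⟨_, hsymm, hcov⟩ => hunique Γ' hsymm hcov⟩
end
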